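/- Fix n ≥ 4. Let D be the set of squarefree integers m with |m| > 1 such that X^n − m is irreducible over ℚ, the ring of integers 𝓞_m of K_m = ℚ(α) (α a root of X^n − m) is monogenic (there exists θ ∈ 𝓞_m with Algebra.adjoin ℤ {θ} = ⊤), but 𝓞_m ≠ ℤ[α] (i.e., Algebra.adjoin ℤ {α} ≠ ⊤). Then the two-sided natural density of D is 0: lim_{X→∞} #{m ∈ D : |m| ≤ X}/(2X) = 0. -/

import Mathlib

open NumberField Polynomial Filter
open scoped Classical

/-- `m` lies in the exceptional set `D`: `m` is squarefree with `|m| > 1`, `X^n − m` is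
irreducible over `ℚ`, and the pure field `K_m = ℚ(α)` (with `α^n = m`) is monogenic but not
`α`-monogenic, i.e. `𝓞_m = ℤ[θ]` for some `θ` while `𝓞_m ≠ ℤ[α]`. -/
def MemD (n : ℕ) (m : ℤ) : Prop :=
  Squarefree m ∧ 1 < |m| ∧ Irreducible ((X : ℚ[X]) ^ n - C (m : ℚ)) ∧
  ∀ (K : Type) [Field K] [NumberField K] (α : 𝓞 K),
    (α : K) ^ n = (m : K) → Algebra.adjoin ℚ {(α : K)} = ⊤ →
      (∃ θ : 𝓞 K, Algebra.adjoin ℤ {θ} = ⊤) ∧ Algebra.adjoin ℤ {α} ≠ ⊤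

lemma card_filter_not_dvd_le (T : Finset ℕ) (hT : ∀ p ∈ T, p.Prime) (X : ℕ) :
    (((Finset.Icc (-(X : ℤ)) (X : ℤ)).filter (fun m => ∀ p ∈ T, ¬ (p : ℤ) ∣ m)).card : ℝ) ≤
      2 * ((∏ p ∈ T, (1 - (p : ℝ)⁻¹)) * (X + 1) + (∏ p ∈ T, p : ℕ)) := by
  set Q : ℕ := ∏ p ∈ T, p with hQ
  have hQ0 : Q ≠ 0 := Finset.prod_ne_zero_iff.mpr fun p hp => (hT p hp).ne_zero
  have hφ : (Q.totient : ℝ) = Q * ∏ p ∈ T, (1 - (p : ℝ)⁻¹) := by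
    have h := Nat.totient_eq_mul_prod_factors Q
    rw [hQ, Nat.primeFactors_prod hT, ← hQ] at h
    have h' := congrArg (fun x : ℚ => (x : ℝ)) h
    simpa using h'
  set S := (Finset.Ico 0 (0 + (X + 1))).filter (fun x => Q.Coprime x) with hS
  have hSc : S.card ≤ Q.totient * ((X + 1) / Q + 1) := Nat.Ico_filter_coprime_le 0 (X + 1) hQ0
  have hsub : (Finset.Icc (-(X : ℤ)) (X : ℤ)).filter (fun m => ∀ p ∈ T, ¬ (p : ℤ) ∣ m) ⊆
      S.image (fun k : ℕ => (k : ℤ)) ∪ S.image (fun k : ℕ => -(k : ℤ)) := by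
    intro m hm
    simp only [Finset.mem_filter, Finset.mem_Icc] at hm
    obtain ⟨⟨h1, h2⟩, h3⟩ := hm
    have hmS : m.natAbs ∈ S := by
      simp only [hS, Finset.mem_filter, Finset.mem_Ico]
      refine ⟨⟨Nat.zero_le _, by omega⟩, ?_⟩
      rw [hQ, Nat.coprime_prod_left_iff]
      intro p hp
      rw [(hT p hp).coprime_iff_not_dvd, ← Int.natCast_dvd]
      exact h3 p hp
    simp only [Finset.mem_union, Finset.mem_image]
    rcases Int.natAbs_eq m with h | h
    · exact Or.inl ⟨_, hmS, h.symm⟩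
    · exact Or.inr ⟨_, hmS, h.symm⟩
  have hcard : ((Finset.Icc (-(X : ℤ)) (X : ℤ)).filter
      (fun m => ∀ p ∈ T, ¬ (p : ℤ) ∣ m)).card ≤ 2 * (Q.totient * ((X + 1) / Q + 1)) := by
    refine (Finset.card_le_card hsub).trans ((Finset.card_union_le _ _).trans ?_)
    have h1 := Finset.card_image_le (s := S) (f := fun k : ℕ => (k : ℤ))
    have h2 := Finset.card_image_le (s := S) (f := fun k : ℕ => -(k : ℤ))
    omega
  refine (Nat.cast_le (α := ℝ).mpr hcard).trans ?_
  push_cast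
  have hdiv : (((X + 1) / Q : ℕ) : ℝ) ≤ (X + 1) / Q := by
    simpa using Nat.cast_div_le (α := ℝ) (m := X + 1) (n := Q)
  have hQpos : (0 : ℝ) < Q := by exact_mod_cast Nat.pos_of_ne_zero hQ0
  have hle : (Q.totient : ℝ) ≤ Q := by exact_mod_cast Nat.totient_le Q
  have h3 : (Q.totient : ℝ) * ((X + 1) / Q) = (∏ p ∈ T, (1 - (p : ℝ)⁻¹)) * (X + 1) := by
    rw [hφ]; field_simp
  have h4 : (Q.totient : ℝ) * (((X + 1) / Q : ℕ) + 1) ≤ Q.totient * ((X + 1) / Q) + Q := by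
    rw [mul_add, mul_one]
    gcongr
  rw [h3] at h4
  have : ((∏ p ∈ T, p : ℕ) : ℝ) = Q := rfl
  linarith

/-- The integers divisible by no prime of a set `B` with `∑ 1/p = ∞` have density zero. -/
theorem tendsto_card_filter_not_dvd_div (B : Set ℕ) (hB : ∀ p ∈ B, p.Prime)
    (hdiv : ¬ Summable (B.indicator fun p : ℕ => (p : ℝ)⁻¹)) :
    Tendsto (fun X : ℕ =>
        (((Finset.Icc (-(X : ℤ)) (X : ℤ)).filter (fun m => ∀ p ∈ B, ¬ (p : ℤ) ∣ m)).card : ℝ) /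
          (2 * X)) atTop (nhds 0) := by
  have hnn : ∀ p : ℕ, 0 ≤ (B.indicator fun p : ℕ => (p : ℝ)⁻¹) p :=
    Set.indicator_nonneg fun p _ => by positivity
  rw [Metric.tendsto_atTop]
  intro ε hε
  obtain ⟨T, hTB, hTε⟩ : ∃ T : Finset ℕ, (∀ p ∈ T, p ∈ B) ∧
      ∏ p ∈ T, (1 - (p : ℝ)⁻¹) < ε / 4 := by
    have : ∃ T : Finset ℕ, -Real.log (ε / 4) < ∑ p ∈ T, (B.indicator fun p : ℕ => (p : ℝ)⁻¹) p := by
      by_contra! h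
      exact hdiv (summable_of_sum_le hnn h)
    obtain ⟨T, hT⟩ := this
    refine ⟨T.filter (· ∈ B), fun p hp => (Finset.mem_filter.mp hp).2, ?_⟩
    rw [Finset.sum_indicator_eq_sum_filter] at hT
    calc ∏ p ∈ T.filter (· ∈ B), (1 - (p : ℝ)⁻¹)
        ≤ ∏ p ∈ T.filter (· ∈ B), Real.exp (-(p : ℝ)⁻¹) := by
          refine Finset.prod_le_prod (fun p hp => ?_) fun p _ => ?_
          · rw [sub_nonneg]
            exact inv_le_one_of_one_le₀
              (by exact_mod_cast (hB p (Finset.mem_filter.mp hp).2).one_le)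
          · linarith [Real.add_one_le_exp (-(p : ℝ)⁻¹)]
      _ = Real.exp (-∑ p ∈ T.filter (· ∈ B), (p : ℝ)⁻¹) := by
          rw [← Real.exp_sum, Finset.sum_neg_distrib]
      _ < Real.exp (Real.log (ε / 4)) := by
          rw [Real.exp_lt_exp]; linarith
      _ = ε / 4 := Real.exp_log (by positivity)
  set P := ∏ p ∈ T, (1 - (p : ℝ)⁻¹) with hP
  set Q : ℕ := ∏ p ∈ T, p
  obtain ⟨X₀, hX₀⟩ := exists_nat_gt (4 * (Q : ℝ) / ε + 1)
  refine ⟨X₀, fun X hX => ?_⟩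
  have hXX : 4 * (Q : ℝ) / ε + 1 < X := hX₀.trans_le (by exact_mod_cast hX)
  have hX1 : (1 : ℝ) < X := by
    have : 0 ≤ 4 * (Q : ℝ) / ε := by positivity
    linarith
  have hQε : 4 * (Q : ℝ) < ε * X := by
    have : 4 * (Q : ℝ) / ε < X := by linarith
    rw [div_lt_iff₀ hε] at this
    linarith
  rw [Real.dist_eq, sub_zero, abs_of_nonneg (by positivity), div_lt_iff₀ (by positivity)]
  calc (((Finset.Icc (-(X : ℤ)) (X : ℤ)).filter (fun m => ∀ p ∈ B, ¬ (p : ℤ) ∣ m)).card : ℝ)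
      ≤ ((Finset.Icc (-(X : ℤ)) (X : ℤ)).filter (fun m => ∀ p ∈ T, ¬ (p : ℤ) ∣ m)).card := by
        refine Nat.cast_le.mpr (Finset.card_le_card ?_)
        exact Finset.monotone_filter_right _ fun m _ h p hp => h p (hTB p hp)
    _ ≤ 2 * (P * (X + 1) + Q) := card_filter_not_dvd_le T (fun p hp => hB p (hTB p hp)) X
    _ < ε * (2 * X) := by nlinarith

lemma prod_primeIdeals_injOn {R : Type*} [CommRing R] [IsDedekindDomain R]
    (S : Finset (Ideal R)) (hS : ∀ P ∈ S, P.IsPrime ∧ P ≠ ⊥) :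
    Set.InjOn (fun t : Finset (Ideal R) => ∏ P ∈ t, P) (S.powerset : Set (Finset (Ideal R))) := by
  have key : ∀ t ⊆ S, ∀ P ∈ S, (P ∣ ∏ Q ∈ t, Q ↔ P ∈ t) := by
    intro t ht P hP
    have hPp : Prime P := Ideal.prime_of_isPrime (hS P hP).2 (hS P hP).1
    refine ⟨fun h => ?_, fun h => Finset.dvd_prod_of_mem _ h⟩
    obtain ⟨Q, hQ, hPQ⟩ := (Prime.dvd_finsetProd_iff hPp _).mp h
    have hQp : Prime Q := Ideal.prime_of_isPrime (hS Q (ht hQ)).2 (hS Q (ht hQ)).1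
    have : P = Q := associated_iff_eq.mp (hPp.associated_of_dvd hQp hPQ)
    exact this ▸ hQ
  intro t ht u hu htu
  simp only [Finset.coe_powerset, Set.mem_preimage, Set.mem_powerset_iff,
    Finset.coe_subset] at ht hu htu
  ext P
  constructor
  · intro h
    exact (key u hu P (ht h)).mp (htu ▸ (key t ht P (ht h)).mpr h)
  · intro h
    exact (key t ht P (hu h)).mp (htu ▸ (key u hu P (hu h)).mpr h)

/-- Near `s = 1`, the finite Euler products over prime ideals are bounded by a simple pole. -/
lemma eventually_prod_one_add_absNorm_rpow_le (K : Type*) [Field K] [NumberField K] :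
    ∃ R : ℝ, ∀ᶠ s : ℝ in nhdsWithin 1 (Set.Ioi 1), ∀ S : Finset (Ideal (𝓞 K)),
      (∀ P ∈ S, P.IsPrime ∧ P ≠ ⊥) →
        ∏ P ∈ S, (1 + (Ideal.absNorm P : ℝ) ^ (-s)) ≤ R / (s - 1) := by
  have hlim := tendsto_sub_one_mul_dedekindZeta_nhdsGT K
  have hpos := dedekindZeta_residue_pos K
  set ρ := dedekindZeta_residue K
  refine ⟨2 * ρ, ?_⟩
  have hball := hlim.eventually (Metric.ball_mem_nhds (ρ : ℂ) hpos)
  filter_upwards [hball, self_mem_nhdsWithin] with s hs hs1 S hS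
  have hs1 : 1 < s := hs1
  rw [Complex.dist_eq] at hs
  set f : ℕ → ℝ := fun n => Nat.card {I : Ideal (𝓞 K) // Ideal.absNorm I = n} with hf
  set g : ℕ → ℝ := fun n => if n = 0 then 0 else f n * (n : ℝ) ^ (-s) with hg
  have hterm : ∀ n, LSeries.term (fun n ↦ (Nat.card {I : Ideal (𝓞 K) // Ideal.absNorm I = n} : ℂ))
      s n = ((g n : ℝ) : ℂ) := by
    intro n
    rcases eq_or_ne n 0 with rfl | hn
    · simp [hg]
    · rw [LSeries.term_of_ne_zero hn]
      simp only [hg, hn, if_false, hf]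
      rw [Complex.ofReal_mul, Complex.ofReal_cpow (Nat.cast_nonneg n), Complex.ofReal_neg,
        Complex.cpow_neg]
      simp [div_eq_mul_inv]
  have hζ : dedekindZeta K s = ((∑' n, g n : ℝ) : ℂ) := by
    rw [dedekindZeta, LSeries, Complex.ofReal_tsum]
    exact tsum_congr hterm
  rw [hζ, ← Complex.ofReal_one, ← Complex.ofReal_sub, ← Complex.ofReal_mul, ← Complex.ofReal_sub,
    Complex.norm_real, Real.norm_eq_abs, abs_lt] at hs
  have hsum : Summable g := by
    by_contra h
    rw [tsum_eq_zero_of_not_summable h] at hs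
    linarith [hs.1]
  have hg0 : ∀ n, 0 ≤ g n := fun n => by
    simp only [hg]; split_ifs <;> positivity
  have hfinal : ∏ P ∈ S, (1 + (Ideal.absNorm P : ℝ) ^ (-s)) ≤ ∑' n, g n := by
    rw [Finset.prod_one_add]
    have h1 : ∀ t ∈ S.powerset, ∏ P ∈ t, (Ideal.absNorm P : ℝ) ^ (-s) =
        (fun n : ℕ => (n : ℝ) ^ (-s)) (Ideal.absNorm (∏ P ∈ t, P)) := by
      intro t _
      simp only [map_prod, Nat.cast_prod]
      rw [Real.finsetProd_rpow _ _ fun P _ => Nat.cast_nonneg _]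
    rw [Finset.sum_congr rfl h1,
      Finset.sum_comp (fun n : ℕ => (n : ℝ) ^ (-s)) fun t => Ideal.absNorm (∏ P ∈ t, P)]
    refine le_trans (Finset.sum_le_sum fun n hn => ?_) (hsum.sum_le_tsum _ fun n _ => hg0 n)
    obtain ⟨t, ht, rfl⟩ := Finset.mem_image.mp hn
    have hn0 : Ideal.absNorm (∏ P ∈ t, P) ≠ 0 := by
      rw [Ne, Ideal.absNorm_eq_zero_iff]
      exact Finset.prod_ne_zero_iff.mpr fun P hP => (hS P (Finset.mem_powerset.mp ht hP)).2
    simp only [hg, hn0, if_false, nsmul_eq_mul, hf]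
    refine mul_le_mul_of_nonneg_right ?_ (by positivity)
    set m := Ideal.absNorm (∏ P ∈ t, P)
    have hfin : Finite {I : Ideal (𝓞 K) // Ideal.absNorm I = m} :=
      (Ideal.finite_setOfPred_absNorm_eq m)
    have := Nat.card_le_card_of_injective
      (fun u : {u : Finset (Ideal (𝓞 K)) // u ∈ S.powerset.filter
          (fun u => Ideal.absNorm (∏ P ∈ u, P) = m)} =>
        (⟨∏ P ∈ u.1, P, (Finset.mem_filter.mp u.2).2⟩ : {I : Ideal (𝓞 K) // Ideal.absNorm I = m}))
      (fun u v huv => Subtype.ext (prod_primeIdeals_injOn S hS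
        (Finset.mem_filter.mp u.2).1 (Finset.mem_filter.mp v.2).1 (Subtype.ext_iff.mp huv)))
    rw [Nat.card_eq_fintype_card, Fintype.card_coe] at this
    exact_mod_cast this
  refine hfinal.trans ?_
  rw [le_div_iff₀ (by linarith)]
  nlinarith [hs.2]

/-- The primes congruent to `1` modulo `h`. -/
def primesOneMod (h : ℕ) : Set ℕ := {p | p.Prime ∧ (p : ZMod h) = 1}

lemma summable_indicator_rpow (A : Set ℕ) {s : ℝ} (hs : 1 < s) :
    Summable (A.indicator fun p : ℕ => (p : ℝ) ^ (-s)) :=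
  (Real.summable_nat_rpow.mpr (by linarith)).indicator A

open ArithmeticFunction.vonMangoldt in
lemma exists_le_tsum_log_primesOneMod (h : ℕ) [NeZero h] :
    ∃ C : ℝ, ∀ x ∈ Set.Ioc (1 : ℝ) 2,
      Summable ((primesOneMod h).indicator fun p : ℕ => Real.log p * (p : ℝ) ^ (-x)) →
      (h.totient : ℝ)⁻¹ / (x - 1) - C ≤
        ∑' p, (primesOneMod h).indicator (fun p : ℕ => Real.log p * (p : ℝ) ^ (-x)) p := by
  obtain ⟨C, hC⟩ := LSeries_residueClass_lower_bound (q := h) (a := 1) isUnit_one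
  set v : ℕ → ℝ := fun n ↦ (if n.Prime then 0 else residueClass (1 : ZMod h) n) / n with hv
  have hvs : Summable v := summable_residueClass_non_primes_div (1 : ZMod h)
  refine ⟨C + ∑' n, v n, fun x hx hsum => ?_⟩
  have h1 := hC hx
  have hle : ∀ n : ℕ, residueClass (1 : ZMod h) n / (n : ℝ) ^ x ≤
      (primesOneMod h).indicator (fun p : ℕ => Real.log p * (p : ℝ) ^ (-x)) n + v n := by
    intro n
    rcases eq_or_ne n 0 with rfl | hn
    · rw [Set.indicator_of_notMem fun h' => Nat.not_prime_zero h'.1]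
      simp [hv]
    · by_cases hp : n.Prime
      · simp only [hv, hp, if_true, zero_div, add_zero]
        by_cases h1 : (n : ZMod h) = 1
        · rw [Set.indicator_of_mem (show n ∈ primesOneMod h from ⟨hp, h1⟩), residueClass,
            Set.indicator_of_mem (by exact h1), ArithmeticFunction.vonMangoldt_apply_prime hp,
            Real.rpow_neg (Nat.cast_nonneg n), div_eq_mul_inv]
        · rw [residueClass, Set.indicator_of_notMem (by exact h1), zero_div]
          exact Set.indicator_nonneg (fun p _ => by positivity) _
      · rw [Set.indicator_of_notMem (fun h' => hp h'.1), zero_add]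
        simp only [hv, hp, if_false]
        refine div_le_div_of_nonneg_left (residueClass_nonneg _ n)
          (by exact_mod_cast Nat.pos_of_ne_zero hn) ?_
        have : (1 : ℝ) ≤ n := by exact_mod_cast Nat.one_le_iff_ne_zero.mpr hn
        simpa using Real.rpow_le_rpow_of_exponent_le this hx.1.le
  have hs := hsum.add hvs
  have h2 : ∑' n, residueClass (1 : ZMod h) n / (n : ℝ) ^ x ≤ _ :=
    Summable.tsum_le_tsum hle (Summable.of_nonneg_of_le
      (fun n => div_nonneg (residueClass_nonneg _ n) (by positivity)) hle hs) hs
  rw [hsum.tsum_add hvs] at h2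
  linarith

lemma rpow_neg_sub_rpow_neg_ge {p s t : ℝ} (hp : 0 < p) :
    (s - t) * (Real.log p * p ^ (-s)) ≤ p ^ (-t) - p ^ (-s) := by
  have h1 : p ^ (-t) = p ^ (-s) * Real.exp ((s - t) * Real.log p) := by
    rw [mul_comm (s - t), ← Real.rpow_def_of_pos hp, ← Real.rpow_add hp]
    congr 1; ring
  have h2 := Real.add_one_le_exp ((s - t) * Real.log p)
  have h3 : 0 < p ^ (-s) := Real.rpow_pos_of_pos hp _
  rw [h1]
  nlinarith

/-- A logarithmic lower bound for `∑ p⁻ˢ` over the primes `p ≡ 1 mod h` at `s = 1 + 2⁻ᵏ`. -/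
lemma exists_le_tsum_primesOneMod (h : ℕ) [NeZero h] :
    ∃ C : ℝ, ∀ k : ℕ, (h.totient : ℝ)⁻¹ / 2 * k - C ≤
      ∑' p, (primesOneMod h).indicator (fun p : ℕ => (p : ℝ) ^ (-(1 + (2 : ℝ)⁻¹ ^ k))) p := by
  obtain ⟨C, hC⟩ := exists_le_tsum_log_primesOneMod h
  set G : ℕ → ℝ := fun k =>
    ∑' p, (primesOneMod h).indicator (fun p : ℕ => (p : ℝ) ^ (-(1 + (2 : ℝ)⁻¹ ^ k))) p with hG
  have hstep : ∀ k, (h.totient : ℝ)⁻¹ / 2 - |C| * (2 : ℝ)⁻¹ ^ (k + 1) ≤ G (k + 1) - G k := by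
    intro k
    set δ : ℝ := (2 : ℝ)⁻¹ ^ (k + 1) with hδ
    have hδ2 : (2 : ℝ)⁻¹ ^ k = 2 * δ := by rw [hδ, pow_succ]; ring
    have hδ0 : 0 < δ := by positivity
    have hδ1 : 2 * δ ≤ 1 := by
      rw [← hδ2]; exact pow_le_one₀ (by norm_num) (by norm_num)
    have hle : ∀ p : ℕ, δ * (primesOneMod h).indicator
          (fun p : ℕ => Real.log p * (p : ℝ) ^ (-(1 + 2 * δ))) p ≤
        (primesOneMod h).indicator (fun p : ℕ => (p : ℝ) ^ (-(1 + δ))) p -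
        (primesOneMod h).indicator (fun p : ℕ => (p : ℝ) ^ (-(1 + 2 * δ))) p := by
      intro p
      by_cases hp : p ∈ primesOneMod h
      · simp only [Set.indicator_of_mem hp]
        have := rpow_neg_sub_rpow_neg_ge (p := p) (s := 1 + 2 * δ) (t := 1 + δ)
          (by exact_mod_cast hp.1.pos)
        rwa [show 1 + 2 * δ - (1 + δ) = δ by ring] at this
      · simp [Set.indicator_of_notMem hp]
    have hs1 := summable_indicator_rpow (primesOneMod h) (s := 1 + δ) (by linarith)
    have hs2 := summable_indicator_rpow (primesOneMod h) (s := 1 + 2 * δ) (by linarith)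
    have hsl' : Summable fun p => δ * (primesOneMod h).indicator
          (fun p : ℕ => Real.log p * (p : ℝ) ^ (-(1 + 2 * δ))) p :=
      Summable.of_nonneg_of_le (fun p => mul_nonneg hδ0.le
        (Set.indicator_nonneg (fun p _ => by positivity) _)) hle (hs1.sub hs2)
    have hsl := (summable_mul_left_iff hδ0.ne').mp hsl'
    have hb := hC (1 + 2 * δ) ⟨by linarith, by linarith⟩ hsl
    have ht := Summable.tsum_le_tsum hle hsl' (hs1.sub hs2)
    rw [tsum_mul_left, hs1.tsum_sub hs2] at ht
    simp only [hG, ← hδ, hδ2]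
    refine le_trans ?_ ht
    have hm := mul_le_mul_of_nonneg_left hb hδ0.le
    refine le_trans ?_ hm
    have e1 : δ * ((h.totient : ℝ)⁻¹ / (1 + 2 * δ - 1) - C) = (h.totient : ℝ)⁻¹ / 2 - C * δ := by
      rw [add_sub_cancel_left]; field_simp
    rw [e1]
    nlinarith [le_abs_self C]
  have hG0 : 0 ≤ G 0 := tsum_nonneg fun p => Set.indicator_nonneg (fun p _ => by positivity) _
  refine ⟨|C|, fun k => ?_⟩
  have hind : ∀ k : ℕ, (h.totient : ℝ)⁻¹ / 2 * k - |C| * (1 - (2 : ℝ)⁻¹ ^ k) ≤ G k := by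
    intro k
    induction k with
    | zero => simpa using hG0
    | succ k ih =>
      have := hstep k
      have e : (2 : ℝ)⁻¹ ^ k = 2 * (2 : ℝ)⁻¹ ^ (k + 1) := by rw [pow_succ]; ring
      rw [e] at ih
      push_cast
      linarith
  refine le_trans ?_ (hind k)
  have : 0 ≤ |C| * (2 : ℝ)⁻¹ ^ k := by positivity
  linarith

lemma exp_sub_sq_le_one_add {x : ℝ} (hx : 0 ≤ x) : Real.exp (x - x ^ 2) ≤ 1 + x := by
  have h1 := Real.add_one_le_exp (-(x - x ^ 2))
  have h2 : Real.exp (x - x ^ 2) * Real.exp (-(x - x ^ 2)) = 1 := by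
    rw [← Real.exp_add]; simp
  have h3 := Real.exp_pos (x - x ^ 2)
  have h4 : Real.exp (x - x ^ 2) * (1 - x + x ^ 2) ≤ 1 := by
    rw [← h2]; exact mul_le_mul_of_nonneg_left (by linarith) h3.le
  have h5 : Real.exp (x - x ^ 2) * (1 + x ^ 3) ≤ 1 + x := by
    calc Real.exp (x - x ^ 2) * (1 + x ^ 3)
        = Real.exp (x - x ^ 2) * (1 - x + x ^ 2) * (1 + x) := by ring
      _ ≤ 1 * (1 + x) := mul_le_mul_of_nonneg_right h4 (by linarith)
      _ = 1 + x := one_mul _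
  have h6 : 0 ≤ Real.exp (x - x ^ 2) * x ^ 3 := by positivity
  linarith

/-- `p` has as many prime ideals of norm `p` in `K` as the degree of `K`. -/
def SplitsCompletely (K : Type*) [Field K] [NumberField K] (p : ℕ) : Prop :=
  ∃ F : Finset (Ideal (𝓞 K)), F.card = Module.finrank ℚ K ∧
    ∀ P ∈ F, P.IsPrime ∧ Ideal.absNorm P = p

lemma eventually_exp_sum_le (K : Type*) [Field K] [NumberField K] :
    ∃ R : ℝ, ∀ᶠ s : ℝ in nhdsWithin 1 (Set.Ioi 1), ∀ T : Finset ℕ,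
      (∀ p ∈ T, p.Prime ∧ SplitsCompletely K p) →
        Real.exp (Module.finrank ℚ K * ∑ p ∈ T, ((p : ℝ) ^ (-s) - (p : ℝ) ^ (-2 : ℝ))) ≤
          R / (s - 1) := by
  obtain ⟨R, hR⟩ := eventually_prod_one_add_absNorm_rpow_le K
  refine ⟨R, ?_⟩
  filter_upwards [hR, self_mem_nhdsWithin] with s hs hs1 T hT
  have hs1 : 1 < s := hs1
  have hchoose : ∀ p : ℕ, ∃ F : Finset (Ideal (𝓞 K)), p ∈ T →
      (F.card = Module.finrank ℚ K ∧ ∀ P ∈ F, P.IsPrime ∧ Ideal.absNorm P = p) := by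
    intro p
    by_cases hp : p ∈ T
    · obtain ⟨F, hF⟩ := (hT p hp).2
      exact ⟨F, fun _ => hF⟩
    · exact ⟨∅, fun h => absurd h hp⟩
  choose F hF using hchoose
  have hS := hs (T.biUnion F) (by
    intro P hP
    obtain ⟨p, hp, hPp⟩ := Finset.mem_biUnion.mp hP
    refine ⟨((hF p hp).2 P hPp).1, ?_⟩
    rintro rfl
    have := ((hF p hp).2 ⊥ hPp).2
    rw [Ideal.absNorm_bot] at this
    exact (hT p hp).1.ne_zero this.symm)
  refine le_trans ?_ hS
  rw [Finset.prod_biUnion (by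
    intro p hp q hq hpq
    rw [Function.onFun, Finset.disjoint_left]
    intro P hP hQ
    exact hpq (((hF p hp).2 P hP).2.symm.trans ((hF q hq).2 P hQ).2))]
  rw [Finset.mul_sum, Real.exp_sum]
  refine Finset.prod_le_prod (fun p _ => (Real.exp_pos _).le) fun p hp => ?_
  rw [Finset.prod_congr rfl fun P hP => by rw [((hF p hp).2 P hP).2], Finset.prod_const,
    (hF p hp).1, Real.exp_nat_mul]
  refine pow_le_pow_left₀ (Real.exp_pos _).le ?_ _
  have hp1 : (1 : ℝ) ≤ p := by exact_mod_cast (hT p hp).1.one_le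
  refine le_trans (Real.exp_le_exp.mpr ?_) (exp_sub_sq_le_one_add (x := (p : ℝ) ^ (-s))
    (by positivity))
  have : ((p : ℝ) ^ (-s)) ^ 2 ≤ (p : ℝ) ^ (-2 : ℝ) := by
    rw [← Real.rpow_natCast, ← Real.rpow_mul (by positivity)]
    exact Real.rpow_le_rpow_of_exponent_le hp1 (by push_cast; linarith)
  linarith

/-- If almost all primes `p ≡ 1 mod h` (up to a set with convergent sum of reciprocals) split
completely in `K`, then `[K : ℚ] < 2 φ(h)`. -/
theorem finrank_lt_of_summable_not_split (K : Type*) [Field K] [NumberField K] (h : ℕ) [NeZero h]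
    (hsum : Summable ({p | p ∈ primesOneMod h ∧ ¬ SplitsCompletely K p}.indicator
      fun p : ℕ => (p : ℝ)⁻¹)) :
    Module.finrank ℚ K < 2 * h.totient := by
  by_contra! hd
  set d := Module.finrank ℚ K with hd_def
  set A := primesOneMod h with hA
  set S : Set ℕ := {p | p ∈ A ∧ SplitsCompletely K p} with hS
  set B : Set ℕ := {p | p ∈ A ∧ ¬ SplitsCompletely K p} with hB
  have hφ : 0 < h.totient := Nat.totient_pos.mpr (Nat.pos_of_ne_zero (NeZero.ne h))
  have hφ' : (0 : ℝ) < h.totient := by exact_mod_cast hφ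
  have hdpos : (0 : ℝ) < d := by exact_mod_cast (by omega : 0 < d)
  obtain ⟨R, hR⟩ := eventually_exp_sum_le K
  obtain ⟨C, hC⟩ := exists_le_tsum_primesOneMod h
  have hsq : Summable fun p : ℕ => (p : ℝ) ^ (-2 : ℝ) :=
    Real.summable_nat_rpow.mpr (by norm_num)
  set C₂ := ∑' p : ℕ, (p : ℝ) ^ (-2 : ℝ)
  set C₃ := ∑' p, B.indicator (fun p : ℕ => (p : ℝ)⁻¹) p
  have hlim : Tendsto (fun k : ℕ => 1 + (2 : ℝ)⁻¹ ^ k) atTop (nhdsWithin 1 (Set.Ioi 1)) := by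
    refine tendsto_nhdsWithin_iff.mpr ⟨?_, Eventually.of_forall fun k => ?_⟩
    · simpa using (tendsto_pow_atTop_nhds_zero_of_lt_one (r := (2 : ℝ)⁻¹)
        (by norm_num) (by norm_num)).const_add 1
    · have : (0 : ℝ) < (2 : ℝ)⁻¹ ^ k := by positivity
      exact lt_add_of_pos_right 1 this
  have hbound : ∀ᶠ k : ℕ in atTop, (h.totient : ℝ)⁻¹ / 2 * k - C ≤
      (Real.log R + k * Real.log 2) / d + C₂ + C₃ := by
    filter_upwards [hlim.eventually hR] with k hk
    set s : ℝ := 1 + (2 : ℝ)⁻¹ ^ k with hs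
    have hs1 : 1 < s := lt_add_of_pos_right 1 (by positivity)
    have hRk : R / (s - 1) = R * 2 ^ k := by
      rw [hs, add_sub_cancel_left, inv_pow, div_inv_eq_mul]
    have hRpos : 0 < R := by
      have := hk ∅ (by simp)
      rw [hRk] at this
      have h2 := (Real.exp_pos _).trans_le this
      exact (pos_iff_pos_of_mul_pos h2).mpr (by positivity)
    refine (hC k).trans ?_
    have hS1 := summable_indicator_rpow S hs1
    have hSle : ∑' p, S.indicator (fun p : ℕ => (p : ℝ) ^ (-s)) p ≤
        (Real.log R + k * Real.log 2) / d + C₂ := by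
      refine hS1.tsum_le_of_sum_le fun T => ?_
      rw [Finset.sum_indicator_eq_sum_filter]
      have h1 := hk (T.filter (· ∈ S)) fun p hp =>
        ⟨(Finset.mem_filter.mp hp).2.1.1, (Finset.mem_filter.mp hp).2.2⟩
      rw [hRk] at h1
      have h2 := Real.log_le_log (Real.exp_pos _) h1
      rw [Real.log_exp, Real.log_mul hRpos.ne' (by positivity), Real.log_pow,
        Finset.sum_sub_distrib, ← hd_def, ← le_div_iff₀' hdpos] at h2
      have h3 : ∑ p ∈ T.filter (· ∈ S), (p : ℝ) ^ (-2 : ℝ) ≤ C₂ :=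
        hsq.sum_le_tsum _ fun p _ => by positivity
      linarith
    have hAle : ∀ p : ℕ, A.indicator (fun p : ℕ => (p : ℝ) ^ (-s)) p ≤
        S.indicator (fun p : ℕ => (p : ℝ) ^ (-s)) p + B.indicator (fun p : ℕ => (p : ℝ)⁻¹) p := by
      intro p
      by_cases hp : p ∈ A
      · have hp1 : (1 : ℝ) ≤ p := by exact_mod_cast hp.1.one_le
        by_cases hps : SplitsCompletely K p
        · rw [Set.indicator_of_mem hp, Set.indicator_of_mem (show p ∈ S from ⟨hp, hps⟩),
            Set.indicator_of_notMem (fun hb : p ∈ B => hb.2 hps), add_zero]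
        · rw [Set.indicator_of_mem hp, Set.indicator_of_mem (show p ∈ B from ⟨hp, hps⟩),
            Set.indicator_of_notMem (fun hb : p ∈ S => hps hb.2), zero_add, ← Real.rpow_neg_one]
          exact Real.rpow_le_rpow_of_exponent_le hp1 (by linarith)
      · rw [Set.indicator_of_notMem hp]
        exact add_nonneg (Set.indicator_nonneg (fun p _ => by positivity) _)
          (Set.indicator_nonneg (fun p _ => by positivity) _)
    have h4 := Summable.tsum_le_tsum hAle (summable_indicator_rpow A hs1) (hS1.add hsum)
    rw [hS1.tsum_add hsum] at h4
    exact h4.trans (add_le_add hSle le_rfl)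
  have hgap : 0 < (h.totient : ℝ)⁻¹ / 2 - Real.log 2 / d := by
    have hd' : 2 * (h.totient : ℝ) ≤ d := by exact_mod_cast hd
    have h5 : Real.log 2 / d ≤ Real.log 2 / (2 * h.totient) :=
      div_le_div_of_nonneg_left (Real.log_nonneg (by norm_num)) (by positivity) hd'
    have h6 : Real.log 2 / (2 * h.totient) < 1 / (2 * h.totient) :=
      div_lt_div_of_pos_right (by linarith [Real.log_two_lt_d9]) (by positivity)
    have h7 : (h.totient : ℝ)⁻¹ / 2 = 1 / (2 * h.totient) := by field_simp
    linarith
  have htend : Tendsto (fun k : ℕ => ((h.totient : ℝ)⁻¹ / 2 - Real.log 2 / d) * (k : ℝ))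
      atTop atTop := tendsto_natCast_atTop_atTop.const_mul_atTop hgap
  obtain ⟨k, hk1, hk2⟩ := (hbound.and
    (htend.eventually (eventually_gt_atTop (Real.log R / d + C₂ + C₃ + C)))).exists
  rw [add_div, mul_div_assoc] at hk1
  linarith

section CompleteSplitting

open scoped Pointwise

lemma dvd_sub_one_of_mem_primesOneMod {h p : ℕ} (hp : p ∈ primesOneMod h) : h ∣ p - 1 := by
  rw [← ZMod.natCast_eq_zero_iff, Nat.cast_sub hp.1.one_le, hp.2]
  simp

/-- If `X ^ h - a` has a root modulo `p ≡ 1 mod h`, all its roots in a domain of characteristic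
`p` lie in the prime field. -/
lemma exists_intCast_eq_of_pow_eq {Q : Type*} [CommRing Q] [IsDomain Q] {h p : ℕ} [CharP Q p]
    (hh : 0 < h) (hp : p ∈ primesOneMod h) {a : ℤ} (hy : ∃ y : ZMod p, y ^ h = (a : ZMod p))
    {β : Q} (hβ : β ^ h = (a : Q)) : ∃ r : ℤ, β = r := by
  have : Fact p.Prime := ⟨hp.1⟩
  obtain ⟨y, hy⟩ := hy
  have : NeZero (p - 1) := ⟨Nat.sub_ne_zero_of_lt hp.1.one_lt⟩
  have : HasEnoughRootsOfUnity (ZMod p) h :=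
    HasEnoughRootsOfUnity.of_dvd (ZMod p) (dvd_sub_one_of_mem_primesOneMod hp)
  obtain ⟨ζ, hζ⟩ := HasEnoughRootsOfUnity.exists_primitiveRoot (ZMod p) h
  let φ : ZMod p →+* Q := ZMod.castHom dvd_rfl Q
  have hζ' : IsPrimitiveRoot (φ ζ) h := hζ.map_of_injective φ.injective
  have h0 : β ^ h - φ y ^ h = 0 := by
    rw [hβ, ← map_pow, hy, map_intCast, sub_self]
  rw [hζ'.pow_sub_pow_eq_prod_sub_mul _ _ hh, Finset.prod_eq_zero_iff] at h0
  obtain ⟨ξ, hξ, hβξ⟩ := h0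
  rw [mem_nthRootsFinset hh] at hξ
  have : NeZero h := ⟨hh.ne'⟩
  obtain ⟨i, -, rfl⟩ := hζ'.eq_pow_of_pow_eq_one hξ
  obtain ⟨r, hr⟩ := ZMod.intCast_surjective (ζ ^ i * y)
  refine ⟨r, ?_⟩
  rw [sub_eq_zero.mp hβξ, ← map_pow, ← map_mul, ← hr, map_intCast]

/-- Distinct roots of `X ^ h - a` stay distinct modulo a prime not dividing `h * a`. -/
lemma eq_of_pow_eq_of_sub_mem {R : Type*} [CommRing R] [IsDomain R] {h : ℕ} {a β γ : R}
    (hβ : β ^ h = a) (hγ : γ ^ h = a) {P : Ideal R} [P.IsPrime] (hh : (h : R) ∉ P) (ha : a ∉ P)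
    (hsub : β - γ ∈ P) : β = γ := by
  by_contra hne
  have h1 : (∑ i ∈ Finset.range h, β ^ i * γ ^ (h - 1 - i)) * (β - γ) = 0 := by
    rw [(Commute.all β γ).geom_sum₂_mul, hβ, hγ, sub_self]
  have h2 := (mul_eq_zero.mp h1).resolve_right (sub_ne_zero.mpr hne)
  have h3 := congrArg (Ideal.Quotient.mk P) h2
  have h4 : Ideal.Quotient.mk P β = Ideal.Quotient.mk P γ := Ideal.Quotient.eq.mpr hsub
  rw [map_sum, map_zero, Finset.sum_congr rfl (g := fun _ => Ideal.Quotient.mk P (γ ^ (h - 1)))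
    (fun i hi => by
      have := Finset.mem_range.mp hi
      rw [map_mul, map_pow, map_pow, map_pow, h4, ← pow_add]
      congr 1
      omega), Finset.sum_const, Finset.card_range, nsmul_eq_mul, ← map_natCast (Ideal.Quotient.mk P),
    ← map_mul, Ideal.Quotient.eq_zero_iff_mem] at h3
  have h5 := (Ideal.IsPrime.mem_or_mem ‹_› h3).resolve_left hh
  refine ha ?_
  have h6 : γ ∈ P := Ideal.IsPrime.mem_of_pow_mem ‹_› _ h5
  rw [← hγ]
  refine Ideal.pow_mem_of_mem P h6 h (Nat.pos_of_ne_zero ?_)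
  rintro rfl
  exact hh (by simp)

/-- A prime `p ≡ 1 mod h` for which `a` is a nonzero `h`-th power residue splits completely in the
splitting field of `X ^ h - a`. -/
lemma splitsCompletely_of_pow_eq {K : Type*} [Field K] [NumberField K] [IsGalois ℚ K] {h : ℕ}
    (hh : 0 < h) {a : ℤ} (hK : IsSplittingField ℚ K (X ^ h - C (a : ℚ))) {p : ℕ}
    (hp : p ∈ primesOneMod h) (hpa : ¬ (p : ℤ) ∣ a)
    (hy : ∃ y : ZMod p, y ^ h = (a : ZMod p)) : SplitsCompletely K p := by
  have : Fact p.Prime := ⟨hp.1⟩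
  set pI : Ideal ℤ := Ideal.span {(p : ℤ)} with hpI
  have hpz : Prime (p : ℤ) := Nat.prime_iff_prime_int.mp hp.1
  have : pI.IsPrime := (Ideal.span_singleton_prime hpz.ne_zero).mpr hpz
  have : pI.IsMaximal := Ideal.IsPrime.isMaximal inferInstance (by simpa [hpI] using hp.1.ne_zero)
  obtain ⟨⟨P, hPprime, hPover⟩⟩ : Nonempty (Ideal.primesOver pI (𝓞 K)) := inferInstance
  have hmem : ∀ z : ℤ, ((z : 𝓞 K) ∈ P ↔ (p : ℤ) ∣ z) := fun z => by
    rw [← Ideal.mem_span_singleton, ← hpI, hPover.over, Ideal.mem_comap]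
    simp
  have : CharP (𝓞 K ⧸ P) p := by
    refine ⟨fun x => ?_⟩
    rw [← map_natCast (Ideal.Quotient.mk P), Ideal.Quotient.eq_zero_iff_mem,
      ← Int.natCast_dvd_natCast, ← hmem, Int.cast_natCast]
  have hhP : (h : 𝓞 K) ∉ P := by
    rw [← Int.cast_natCast, hmem, Int.natCast_dvd_natCast]
    intro hdvd
    have h1 := Nat.le_of_dvd hh hdvd
    have h2 := Nat.le_of_dvd (Nat.sub_pos_of_lt hp.1.one_lt) (dvd_sub_one_of_mem_primesOneMod hp)
    have := hp.1.pos
    omega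
  have hstab : ∀ σ : Gal(K/ℚ), σ • P = P → σ = 1 := by
    intro σ hσ
    have hfix : ∀ b : 𝓞 K, b ^ h = (a : 𝓞 K) → σ • b = b := by
      intro b hb
      obtain ⟨r, hr⟩ := exists_intCast_eq_of_pow_eq (Q := 𝓞 K ⧸ P) hh hp hy
        (β := Ideal.Quotient.mk P b) (by rw [← map_pow, hb, map_intCast])
      have h1 : b - (r : 𝓞 K) ∈ P := Ideal.Quotient.eq.mp (by rw [hr, map_intCast])
      have hr' : σ • (r : 𝓞 K) = r := map_intCast (MulSemiringAction.toRingHom Gal(K/ℚ) (𝓞 K) σ) r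
      have h2 : σ • b - (r : 𝓞 K) ∈ P := by
        have := Ideal.smul_mem_pointwise_smul σ _ _ h1
        rwa [hσ, smul_sub, hr'] at this
      have h3 : (σ • b) ^ h = (a : 𝓞 K) := by
        rw [← smul_pow', hb]
        exact map_intCast (MulSemiringAction.toRingHom Gal(K/ℚ) (𝓞 K) σ) a
      refine eq_of_pow_eq_of_sub_mem h3 hb hhP (by rwa [hmem]) ?_
      have := P.sub_mem h2 h1
      rwa [sub_sub_sub_cancel_right] at this
    have : (σ : K →ₐ[ℚ] K) = AlgHom.id ℚ K := by
      refine AlgHom.ext_of_adjoin_eq_top hK.adjoin_rootSet' fun β hβ => ?_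
      have hβ' : β ^ h = (a : K) := by
        have := (mem_rootSet.mp hβ).2
        simpa [sub_eq_zero] using this
      have hintegral : IsIntegral ℤ β := IsIntegral.of_pow hh (hβ' ▸ isIntegral_algebraMap (x := a))
      obtain ⟨b, rfl⟩ := (IsIntegralClosure.isIntegral_iff (A := 𝓞 K)).mp hintegral
      have := congrArg (algebraMap (𝓞 K) K) (hfix b (by
        apply FaithfulSMul.algebraMap_injective (𝓞 K) K
        rw [map_pow, map_intCast, hβ']))
      exact this
    ext x
    exact DFunLike.congr_fun this x
  have hinj : Function.Injective fun σ : Gal(K/ℚ) => σ • P := by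
    intro σ τ hστ
    have h1 : (τ⁻¹ * σ) • P = P := by
      rw [mul_smul, inv_smul_eq_iff]; exact hστ
    exact (inv_mul_eq_one.mp (hstab _ h1)).symm
  have hover : ∀ σ : Gal(K/ℚ), σ • P ∈ Ideal.primesOver pI (𝓞 K) := fun σ =>
    (Ideal.primesOver.mk pI (σ • P)).2
  have hfin : (Ideal.primesOver pI (𝓞 K)).Finite := IsDedekindDomain.primesOver_finite pI (𝓞 K)
  have hcard : Nat.card Gal(K/ℚ) ≤ (Ideal.primesOver pI (𝓞 K)).ncard := by
    have := hfin.to_subtype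
    exact Nat.card_le_card_of_injective (β := Ideal.primesOver pI (𝓞 K))
      (fun σ => ⟨σ • P, hover σ⟩) fun σ τ h => hinj (Subtype.ext_iff.mp h)
  have hfund := Ideal.ncard_primesOver_mul_ramificationIdxIn_mul_inertiaDegIn pI (𝓞 K) Gal(K/ℚ)
  have hpos : 0 < Nat.card Gal(K/ℚ) := Nat.card_pos
  have hef : Ideal.ramificationIdxIn pI (𝓞 K) * Ideal.inertiaDegIn pI (𝓞 K) = 1 := by
    rcases Nat.lt_trichotomy (Ideal.ramificationIdxIn pI (𝓞 K) * Ideal.inertiaDegIn pI (𝓞 K)) 1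
      with hlt | heq | hgt
    · rw [Nat.lt_one_iff.mp hlt] at hfund
      omega
    · exact heq
    · nlinarith
  have hf := Nat.eq_one_of_mul_eq_one_left hef
  refine ⟨Finset.univ.image fun σ : Gal(K/ℚ) => σ • P, ?_, ?_⟩
  · rw [Finset.card_image_of_injective _ hinj, Finset.card_univ, ← Nat.card_eq_fintype_card,
      IsGalois.card_aut_eq_finrank]
  · intro Q hQ
    obtain ⟨σ, -, rfl⟩ := Finset.mem_image.mp hQ
    obtain ⟨hQ1, hQ2⟩ := hover σ
    have : (σ • P).IsMaximal := Ideal.IsMaximal.of_liesOver_isMaximal (σ • P) pI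
    refine ⟨hQ1, ?_⟩
    rw [Ideal.absNorm_eq_pow_inertiaDeg' (σ • P) hp.1, Ideal.inertiaDeg'_eq_inertiaDeg,
      ← Ideal.inertiaDegIn_eq_inertiaDeg pI (σ • P) Gal(K/ℚ), hf, pow_one]

end CompleteSplitting

section PureSplittingField

variable {M : Type*} [Field M] [NumberField M] {h : ℕ} {a : ℤ}

lemma exists_isPrimitiveRoot_of_isSplittingField (hh : 0 < h) (ha : a ≠ 0)
    (hM : IsSplittingField ℚ M (X ^ h - C (a : ℚ))) : ∃ ζ : M, IsPrimitiveRoot ζ h := by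
  have hsplit : ((X ^ h - 1 : ℚ[X]).map (algebraMap ℚ M)).Splits :=
    splits_X_pow_sub_one_of_X_pow_sub_C _ h (Int.cast_ne_zero.mpr ha) hM.splits'
  have : NeZero (h : M) := ⟨Nat.cast_ne_zero.mpr hh.ne'⟩
  have hdvd : cyclotomic h M ∣ (X ^ h - 1 : ℚ[X]).map (algebraMap ℚ M) := by
    simpa using cyclotomic.dvd_X_pow_sub_one h M
  have hne : (X ^ h - 1 : ℚ[X]).map (algebraMap ℚ M) ≠ 0 := by
    rw [Polynomial.map_sub, Polynomial.map_pow, map_X, Polynomial.map_one, ← C_1]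
    exact X_pow_sub_C_ne_zero hh 1
  obtain ⟨ζ, hζ⟩ := (hsplit.of_dvd hne hdvd).exists_eval_eq_zero
    (by rw [degree_cyclotomic]; exact_mod_cast (Nat.totient_pos.mpr hh).ne')
  exact ⟨ζ, isRoot_cyclotomic_iff.mp hζ⟩

lemma exists_pow_eq_of_isSplittingField (hh : 0 < h)
    (hM : IsSplittingField ℚ M (X ^ h - C (a : ℚ))) : ∃ β : M, β ^ h = (a : M) := by
  obtain ⟨β, hβ⟩ := hM.splits'.exists_eval_eq_zero
    (by rw [degree_map, degree_X_pow_sub_C hh]; exact_mod_cast hh.ne')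
  refine ⟨β, ?_⟩
  simpa [sub_eq_zero] using hβ

lemma adjoin_primitiveRoot_eq_top (hh : 0 < h) {ζ : M} (hζ : IsPrimitiveRoot ζ h)
    (hlt : Module.finrank ℚ M < 2 * h.totient) : Algebra.adjoin ℚ {ζ} = ⊤ := by
  have hintegral : IsIntegral ℚ ζ := IsIntegral.of_finite ℚ ζ
  have h1 : Module.finrank ℚ (IntermediateField.adjoin ℚ {ζ}) = h.totient := by
    rw [IntermediateField.adjoin.finrank hintegral, ← cyclotomic_eq_minpoly_rat hζ hh,
      natDegree_cyclotomic]
  have h2 := Module.finrank_mul_finrank ℚ (IntermediateField.adjoin ℚ {ζ}) M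
  have h3 : 0 < Module.finrank (IntermediateField.adjoin ℚ {ζ}) M := Module.finrank_pos
  have h4 : Module.finrank (IntermediateField.adjoin ℚ {ζ}) M = 1 := by
    rw [h1] at h2
    have : Module.finrank (IntermediateField.adjoin ℚ {ζ}) M < 2 := by
      by_contra! hge
      have := Nat.mul_le_mul_left h.totient hge
      omega
    omega
  have h5 : IntermediateField.adjoin ℚ {ζ} = ⊤ := by
    rwa [IntermediateField.finrank_eq_one_iff_eq_top] at h4
  rw [← IntermediateField.adjoin_simple_toSubalgebra_of_isAlgebraic hintegral.isAlgebraic, h5,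
    IntermediateField.top_toSubalgebra]

/-- If the splitting field of `X ^ h - a` is no larger than the `h`-th cyclotomic field, then
`a ^ 2` is an `h`-th power: with `β ^ h = a`, the element `β * τ β` is Galois invariant for the
automorphism `τ` inverting the roots of unity. -/
lemma exists_sq_eq_pow_of_finrank_lt [IsGalois ℚ M] (hh : 0 < h) (ha : a ≠ 0)
    (hM : IsSplittingField ℚ M (X ^ h - C (a : ℚ)))
    (hlt : Module.finrank ℚ M < 2 * h.totient) : ∃ r : ℤ, a ^ 2 = r ^ h := by
  obtain ⟨ζ, hζ⟩ := exists_isPrimitiveRoot_of_isSplittingField hh ha hM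
  obtain ⟨β, hβ⟩ := exists_pow_eq_of_isSplittingField hh hM
  have htop := adjoin_primitiveRoot_eq_top hh hζ hlt
  have : NeZero h := ⟨hh.ne'⟩
  have hβ0 : β ≠ 0 := by
    rintro rfl
    rw [zero_pow hh.ne'] at hβ
    exact ha (by exact_mod_cast hβ.symm)
  have hroot : aeval ζ⁻¹ (minpoly ℚ ζ) = 0 := by
    rw [← cyclotomic_eq_minpoly_rat hζ hh, cyclotomic_eq_minpoly_rat hζ.inv hh, minpoly.aeval]
  obtain ⟨τ, hτ⟩ := minpoly.exists_algEquiv_of_root (Algebra.IsAlgebraic.isAlgebraic ζ) hroot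
  replace hτ : τ ζ = ζ⁻¹ := by rw [← inv_inj, ← map_inv₀, hτ, inv_inv]
  have hfix : ∀ σ : Gal(M/ℚ), σ (β * τ β) = β * τ β := by
    intro σ
    obtain ⟨i, -, hi⟩ := hζ.eq_pow_of_pow_eq_one (ξ := σ ζ)
      (by rw [← map_pow, hζ.pow_eq_one, map_one])
    obtain ⟨j, -, hj⟩ := hζ.eq_pow_of_pow_eq_one (ξ := σ β / β)
      (by rw [div_pow, ← map_pow, hβ, map_intCast, div_self (by exact_mod_cast ha)])
    have hσβ : σ β = ζ ^ j * β := by rw [hj, div_mul_cancel₀ _ hβ0]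
    have hcomm : ((σ : M →ₐ[ℚ] M).comp (τ : M →ₐ[ℚ] M)) =
        (τ : M →ₐ[ℚ] M).comp (σ : M →ₐ[ℚ] M) := by
      refine AlgHom.ext_of_adjoin_eq_top htop fun x hx => ?_
      obtain rfl := Set.mem_singleton_iff.mp hx
      change σ (τ x) = τ (σ x)
      rw [hτ, ← hi, map_inv₀, map_pow, hτ, ← hi, inv_pow]
    have hστ : σ (τ β) = τ (σ β) := DFunLike.congr_fun hcomm β
    have hζ0 : ζ ^ j ≠ 0 := pow_ne_zero _ (hζ.ne_zero hh.ne')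
    rw [map_mul, hστ, hσβ, map_mul, map_pow, hτ, inv_pow]
    field_simp
  obtain ⟨r, hr⟩ := IntermediateField.mem_bot.mp ((IsGalois.mem_bot_iff_fixed _).mpr hfix)
  have hrh : r ^ h = (a : ℚ) ^ 2 := by
    apply (algebraMap ℚ M).injective
    rw [map_pow, hr, mul_pow, ← map_pow, hβ, map_intCast, map_pow, map_intCast, sq]
  have hintegral : IsIntegral ℤ r :=
    IsIntegral.of_pow hh (hrh ▸ (isIntegral_algebraMap (R := ℤ) (A := ℚ) (x := a)).pow 2)
  obtain ⟨s, rfl⟩ := IsIntegrallyClosed.isIntegral_iff.mp hintegral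
  refine ⟨s, Int.cast_injective (α := ℚ) ?_⟩
  rw [Int.cast_pow, Int.cast_pow, ← hrh, eq_intCast]

lemma isSquare_of_finrank_lt (hM : IsSplittingField ℚ M (X ^ 2 - C (a : ℚ)))
    (hlt : Module.finrank ℚ M < 2 * Nat.totient 2) : IsSquare a := by
  obtain ⟨β, hβ⟩ := exists_pow_eq_of_isSplittingField two_pos hM
  have hfr : Module.finrank ℚ M = 1 := by
    have : 0 < Module.finrank ℚ M := Module.finrank_pos
    rw [Nat.totient_two] at hlt
    omega
  obtain ⟨r, rfl⟩ : ∃ r : ℚ, algebraMap ℚ M r = β := by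
    have := (Subalgebra.bot_eq_top_iff_finrank_eq_one (F := ℚ) (E := M)).mpr hfr
    exact Algebra.mem_bot.mp (this ▸ Algebra.mem_top)
  have hr : r ^ 2 = (a : ℚ) := (algebraMap ℚ M).injective (by rw [map_pow, hβ, map_intCast])
  exact Rat.isSquare_intCast_iff.mp ⟨r, by rw [← hr, sq]⟩

end PureSplittingField

section NonResidues

/-- The primes modulo which `a` is not an `h`-th power. -/
def nonResiduePrimes (h : ℕ) (a : ℤ) : Set ℕ :=
  {p | p.Prime ∧ ¬ ∃ y : ZMod p, y ^ h = (a : ZMod p)}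

lemma isGalois_splittingField (f : ℚ[X]) : IsGalois ℚ (SplittingField f) := by
  have : IsSplittingField ℚ (SplittingField f) f := IsSplittingField.splittingField f
  exact IsGalois.mk (to_normal := Normal.of_isSplittingField f)

lemma finrank_splittingField_lt_of_summable {h : ℕ} (hh : 0 < h) {a : ℤ} (ha : a ≠ 0)
    (hsum : Summable ((nonResiduePrimes h a).indicator fun p : ℕ => (p : ℝ)⁻¹)) :
    Module.finrank ℚ (SplittingField (X ^ h - C (a : ℚ))) < 2 * h.totient := by
  have : NeZero h := ⟨hh.ne'⟩
  have : NumberField (SplittingField (X ^ h - C (a : ℚ))) := { }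
  have := isGalois_splittingField (X ^ h - C (a : ℚ))
  refine finrank_lt_of_summable_not_split _ h ?_
  have hfin : Summable ((↑a.natAbs.primeFactors : Set ℕ).indicator fun p : ℕ => (p : ℝ)⁻¹) :=
    summable_of_hasFiniteSupport <|
      (Finset.finite_toSet _).subset (Set.support_indicator_subset)
  refine Summable.of_nonneg_of_le (fun p => Set.indicator_nonneg (fun _ _ => by positivity) p)
    (fun p => ?_) (hsum.add hfin)
  have hB : 0 ≤ (nonResiduePrimes h a).indicator (fun p : ℕ => (p : ℝ)⁻¹) p :=
    Set.indicator_nonneg (fun _ _ => by positivity) p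
  have hF : 0 ≤ (↑a.natAbs.primeFactors : Set ℕ).indicator (fun p : ℕ => (p : ℝ)⁻¹) p :=
    Set.indicator_nonneg (fun _ _ => by positivity) p
  by_cases hp : p ∈ {p | p ∈ primesOneMod h ∧
      ¬ SplitsCompletely (SplittingField (X ^ h - C (a : ℚ))) p}
  · rw [Set.indicator_of_mem hp]
    by_cases hpa : (p : ℤ) ∣ a
    · have hpF : p ∈ (↑a.natAbs.primeFactors : Set ℕ) := by
        rw [Finset.mem_coe, Nat.mem_primeFactors]
        exact ⟨hp.1.1, Int.natCast_dvd.mp hpa, Int.natAbs_ne_zero.mpr ha⟩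
      rw [Set.indicator_of_mem hpF]
      exact le_add_of_nonneg_left hB
    · have hpB : p ∈ nonResiduePrimes h a :=
        ⟨hp.1.1, fun hy => hp.2
          (splitsCompletely_of_pow_eq hh (IsSplittingField.splittingField _) hp.1 hpa hy)⟩
      rw [Set.indicator_of_mem hpB]
      exact le_add_of_nonneg_right hF
  · rw [Set.indicator_of_notMem hp]
    exact add_nonneg hB hF

end NonResidues

section Arithmetic

lemma eq_four_of_prime_pow_dvd {n q : ℕ} (hn : 4 ≤ n) (hq : q.Prime)
    (hdvd : q ^ (n * (n - 1) / 2) ∣ n ^ n) : n = 4 := by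
  have hn0 : n ≠ 0 := by omega
  set v := n.factorization q with hv
  have h1 : n * (n - 1) / 2 ≤ n * v := by
    have := (hq.pow_dvd_iff_le_factorization (pow_ne_zero n hn0)).mp hdvd
    simpa [Nat.factorization_pow] using this
  have h2 : n - 1 ≤ 2 * v := by
    have h3 : 2 * (n * (n - 1) / 2) = n * (n - 1) :=
      Nat.mul_div_cancel' (Nat.even_mul_pred_self n).two_dvd
    have h4 : n * (n - 1) ≤ n * (2 * v) := by rw [← h3]; linarith
    exact Nat.le_of_mul_le_mul_left h4 (by omega)
  have h5 : q ^ v ∣ n := Nat.ordProj_dvd n q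
  have h6 : 2 ^ v ≤ n := (Nat.pow_le_pow_left hq.two_le v).trans (Nat.le_of_dvd (by omega) h5)
  have h7 : v < 3 := by
    by_contra! hge
    have : ∀ w, 3 ≤ w → 2 * w + 1 < 2 ^ w := fun w hw => by
      induction w, hw using Nat.le_induction with
      | base => norm_num
      | succ k hk ih => rw [pow_succ]; omega
    have := this v hge
    omega
  have h8 : v = 2 := by omega
  rw [h8] at h5 h6 h2
  have h9 : n = 4 ∨ n = 5 := by omega
  refine h9.resolve_right fun h5' => ?_
  rw [h5'] at h5
  have := Nat.le_of_dvd (by norm_num) h5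
  have hq2 : q = 2 := by nlinarith [hq.two_le]
  rw [hq2] at h5
  norm_num at h5

lemma eq_four_of_sq_eq_pow {n : ℕ} (hn : 4 ≤ n) {c r : ℤ} (hc : 1 < |c|)
    (hdvd : c ^ 2 ∣ (n : ℤ) ^ n) (hr : c ^ 2 = r ^ (n * (n - 1) / 2)) : n = 4 ∧ |c| = 8 := by
  have hN : n * (n - 1) / 2 ≠ 0 := by
    have : 4 * 3 ≤ n * (n - 1) := Nat.mul_le_mul hn (by omega)
    omega
  have hc2 : 1 < |c| ^ 2 := one_lt_pow₀ hc two_ne_zero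
  have hr1 : r.natAbs ≠ 1 := by
    intro h
    have : |r| = 1 := by rw [Int.abs_eq_natAbs, h]; rfl
    rw [← abs_pow, hr, abs_pow, this, one_pow] at hc2
    exact lt_irrefl _ hc2
  obtain ⟨q, hq, hqr⟩ := Nat.exists_prime_and_dvd hr1
  have hdvd' : r.natAbs ^ (n * (n - 1) / 2) ∣ n ^ n := by
    rw [hr, ← Int.natAbs_dvd_natAbs] at hdvd
    simpa [Int.natAbs_pow] using hdvd
  obtain rfl := eq_four_of_prime_pow_dvd hn hq ((pow_dvd_pow_of_dvd hqr _).trans hdvd')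
  refine ⟨rfl, ?_⟩
  norm_num at hdvd' hr
  have hrle : r.natAbs ≤ 2 := by
    by_contra! h3
    have := Nat.pow_le_pow_left h3 6
    norm_num at this
    have := Nat.le_of_dvd (by norm_num) hdvd'
    omega
  have hrge := Nat.le_of_dvd (Nat.pos_of_ne_zero (by rintro h; simp [h] at hdvd')) hqr
  have := hq.two_le
  have hr2 : |r| = 2 := by rw [Int.abs_eq_natAbs]; omega
  have h64 : |c| ^ 2 = 8 ^ 2 := by rw [← abs_pow, hr, abs_pow, hr2]; norm_num
  exact (pow_left_inj₀ (abs_nonneg c) (by norm_num) two_ne_zero).mp h64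

lemma not_summable_nonResiduePrimes {n : ℕ} (hn : 4 ≤ n) {c : ℤ} (hc : 1 < |c|)
    (hdvd : c ^ 2 ∣ (n : ℤ) ^ n) :
    ¬ Summable ((nonResiduePrimes (n * (n - 1) / 2) c).indicator fun p : ℕ => (p : ℝ)⁻¹) := by
  intro hsum
  have hN : 0 < n * (n - 1) / 2 := by
    have : 4 * 3 ≤ n * (n - 1) := Nat.mul_le_mul hn (by omega)
    omega
  have hc0 : c ≠ 0 := by rintro rfl; simp at hc
  have hinst : ∀ h : ℕ, NumberField (SplittingField (X ^ h - C (c : ℚ))) := fun _ => { }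
  have := isGalois_splittingField (X ^ (n * (n - 1) / 2) - C (c : ℚ))
  obtain ⟨r, hr⟩ := exists_sq_eq_pow_of_finrank_lt hN hc0 (IsSplittingField.splittingField _)
    (finrank_splittingField_lt_of_summable hN hc0 hsum)
  obtain ⟨rfl, hc8⟩ := eq_four_of_sq_eq_pow hn hc hdvd hr
  have hsub : nonResiduePrimes 2 c ⊆ nonResiduePrimes (4 * (4 - 1) / 2) c := by
    rintro p ⟨hp, hy⟩
    refine ⟨hp, fun ⟨y, hy'⟩ => hy ⟨y ^ 3, ?_⟩⟩
    rw [← pow_mul]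
    exact hy'
  have hsum2 : Summable ((nonResiduePrimes 2 c).indicator fun p : ℕ => (p : ℝ)⁻¹) :=
    Summable.of_nonneg_of_le (fun p => Set.indicator_nonneg (fun _ _ => by positivity) p)
      (fun p => Set.indicator_le_indicator_of_subset hsub (fun _ => by positivity) p) hsum
  have hsq := isSquare_of_finrank_lt (IsSplittingField.splittingField _)
    (finrank_splittingField_lt_of_summable two_pos hc0 hsum2)
  obtain ⟨s, rfl⟩ := hsq
  have hs : s.natAbs * s.natAbs = 8 := by
    zify
    rw [← abs_mul, hc8]
  have : s.natAbs ≤ 3 := by nlinarith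
  interval_cases s.natAbs <;> omega

end Arithmetic

section PureMonogenic

/-- The determinant of the first `n` coefficients of the first `n` powers of a polynomial. -/
lemma det_coeff_pow {R : Type*} [CommRing R] (g : R[X]) (n : ℕ) :
    (Matrix.of fun i j : Fin n => (g ^ (j : ℕ)).coeff i).det = g.coeff 1 ^ (n * (n - 1) / 2) := by
  nontriviality R
  set f : R[X] := X * g.divX with hf
  have hcomp : ∀ j : ℕ, g ^ j = ((X + C (g.coeff 0)) ^ j).comp f := fun j => by
    rw [pow_comp, add_comp, X_comp, C_comp, hf, X_mul_divX_add]
  have hmul : (Matrix.of fun i j : Fin n => (g ^ (j : ℕ)).coeff i) =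
      (Matrix.of fun i k : Fin n => (f ^ (k : ℕ)).coeff i) *
        (Matrix.of fun k j : Fin n => ((X + C (g.coeff 0)) ^ (j : ℕ)).coeff k) := by
    ext i j
    simp only [Matrix.mul_apply, Matrix.of_apply]
    rw [hcomp, comp, eval₂_eq_sum_range' (n := n) _ (by simp [natDegree_pow_X_add_C]),
      finsetSum_coeff, Finset.sum_range]
    simp [mul_comm]
  have htri : (Matrix.of fun i k : Fin n => (f ^ (k : ℕ)).coeff i).IsLowerTriangular := by
    intro i k hik
    have hik' : (i : ℕ) < k := hik
    simp only [Matrix.of_apply, hf, mul_pow, coeff_X_pow_mul', if_neg hik'.not_ge]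
  rw [hmul, Matrix.det_mul, Matrix.det_matrixOfPolynomials _ (fun i => natDegree_pow_X_add_C _ _)
    (fun i => (monic_X_add_C _).pow _), mul_one, Matrix.det_of_isLowerTriangular _ htri]
  simp only [Matrix.of_apply, hf, mul_pow, coeff_X_pow_mul', le_refl, if_true, Nat.sub_self,
    coeff_zero_eq_eval_zero, eval_pow]
  simp only [← coeff_zero_eq_eval_zero, coeff_divX, zero_add]
  rw [Finset.prod_pow_eq_pow_sum, Fin.sum_univ_eq_sum_range (fun i => i), Finset.sum_range_id]

/-- Modulo an ideal containing `α ^ n`, a polynomial in `α` only depends on its first `n`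
coefficients. -/
lemma aeval_sub_sum_range_mem {S : Type*} [CommRing S] {α : S} {n : ℕ} {I : Ideal S}
    (hα : α ^ n ∈ I) (f : ℤ[X]) : aeval α f - ∑ i : Fin n, f.coeff i • α ^ (i : ℕ) ∈ I := by
  rw [aeval_eq_sum_range' (n := n + (f.natDegree + 1)) (by omega), Finset.sum_range_add,
    ← Fin.sum_univ_eq_sum_range (fun i => f.coeff i • α ^ i), add_sub_cancel_left]
  refine I.sum_mem fun i _ => ?_
  rw [pow_add, zsmul_eq_mul]
  exact I.mul_mem_left _ (I.mul_mem_right _ hα)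

variable {K : Type*} [Field K] [NumberField K] {n : ℕ} {m : ℤ} {α : 𝓞 K}

lemma minpoly_int_eq_X_pow_sub_C (hirr : Irreducible ((X : ℚ[X]) ^ n - C (m : ℚ))) (hn : n ≠ 0)
    (hα : α ^ n = (m : 𝓞 K)) : minpoly ℤ (α : K) = X ^ n - C m ∧
      minpoly ℚ (α : K) = X ^ n - C (m : ℚ) := by
  have hα' : (α : K) ^ n = (m : K) := by
    have := congrArg (algebraMap (𝓞 K) K) hα
    rwa [map_pow, map_intCast] at this
  have hQ : minpoly ℚ (α : K) = X ^ n - C (m : ℚ) := by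
    refine (minpoly.eq_of_irreducible_of_monic hirr ?_ (monic_X_pow_sub_C _ hn)).symm
    simp [hα']
  refine ⟨?_, hQ⟩
  apply map_injective (algebraMap ℤ ℚ) Int.cast_injective
  rw [← minpoly.isIntegrallyClosed_eq_field_fractions' ℚ α.isIntegral_coe, hQ]
  simp

lemma isEisensteinAt_X_pow_sub_C (hm : Squarefree m) (hn : n ≠ 0) {p : ℕ} (hp : p.Prime)
    (hpm : (p : ℤ) ∣ m) :
    (X ^ n - C m : ℤ[X]).IsEisensteinAt (Submodule.span ℤ {(p : ℤ)}) := by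
  have hpz : Prime (p : ℤ) := Nat.prime_iff_prime_int.mp hp
  refine ⟨?_, fun {i} hi => ?_, ?_⟩
  · rw [(monic_X_pow_sub_C m hn).leadingCoeff, Ideal.submodule_span_eq, Ideal.mem_span_singleton]
    exact fun h => hpz.not_isUnit (isUnit_of_dvd_one h)
  · rw [natDegree_X_pow_sub_C] at hi
    rw [Ideal.submodule_span_eq, Ideal.mem_span_singleton, coeff_sub, coeff_X_pow, if_neg hi.ne,
      coeff_C]
    split_ifs
    · simpa using hpm
    · simp
  · rw [Ideal.submodule_span_eq, Ideal.span_singleton_pow, Ideal.mem_span_singleton, coeff_sub,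
      coeff_X_pow, if_neg hn.symm, coeff_C_zero, zero_sub, dvd_neg, sq]
    exact fun h => hpz.not_isUnit (hm _ h)

/-- `ℤ[α]` is `p`-maximal at every prime dividing the squarefree integer `m = α ^ n`. -/
lemma exists_aeval_sub_mem_span (hm : Squarefree m)
    (hirr : Irreducible ((X : ℚ[X]) ^ n - C (m : ℚ))) (hn : n ≠ 0) (hα : α ^ n = (m : 𝓞 K))
    (htop : Algebra.adjoin ℚ {(α : K)} = ⊤) {p : ℕ} (hp : p.Prime) (hpm : (p : ℤ) ∣ m)
    (z : 𝓞 K) : ∃ g : ℤ[X], z - aeval α g ∈ Ideal.span {(p : 𝓞 K)} := by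
  have hpz : Prime (p : ℤ) := Nat.prime_iff_prime_int.mp hp
  set B : PowerBasis ℚ K := PowerBasis.ofAdjoinEqTop (IsIntegral.of_finite ℚ (α : K)) htop with hB
  have hgen : B.gen = (α : K) := rfl
  have hintegral : IsIntegral ℤ B.gen := α.isIntegral_coe
  obtain ⟨d, hd⟩ := IsIntegrallyClosed.isIntegral_iff.mp
    (Algebra.discr_isIntegral ℚ (R := ℤ) (b := B.basis) fun i => by
      rw [B.basis_eq_pow]; exact hintegral.pow _)
  have hd0 : d ≠ 0 := by
    rintro rfl
    exact Algebra.discr_not_zero_of_basis ℚ B.basis (by rw [← hd, map_zero])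
  have hmem := Algebra.discr_mul_isIntegral_mem_adjoin ℚ hintegral z.isIntegral_coe
  rw [← hd, algebraMap_smul] at hmem
  obtain ⟨e, hde, hpe⟩ := (Int.finiteMultiplicity_iff.mpr
    ⟨by simpa using hp.ne_one, hd0⟩ : FiniteMultiplicity (p : ℤ) d).exists_eq_pow_mul_and_not_dvd
  rw [hde, mul_smul] at hmem
  have he : e • (z : K) ∈ Algebra.adjoin ℤ {B.gen} :=
    mem_adjoin_of_smul_prime_pow_smul_of_minpoly_isEisensteinAt hpz hintegral
      (z.isIntegral_coe.smul e) hmem (by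
        rw [hgen, (minpoly_int_eq_X_pow_sub_C hirr hn hα).1]
        exact isEisensteinAt_X_pow_sub_C hm hn hp hpm)
  rw [hgen, Algebra.adjoin_singleton_eq_range_aeval] at he
  obtain ⟨g, hg⟩ := he
  have hg' : aeval α g = e • z := by
    apply FaithfulSMul.algebraMap_injective (𝓞 K) K
    rw [← aeval_algebraMap_apply, map_zsmul]
    exact hg
  obtain ⟨u, v, huv⟩ := (Prime.coprime_iff_not_dvd hpz).mpr hpe
  refine ⟨C v * g, ?_⟩
  rw [map_mul, hg', Ideal.mem_span_singleton]
  refine ⟨(u : 𝓞 K) * z, ?_⟩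
  have huv' : (u : 𝓞 K) * p + v * e = 1 := by exact_mod_cast congrArg (Int.cast (R := 𝓞 K)) huv
  rw [aeval_C, zsmul_eq_mul, eq_intCast]
  linear_combination (-z) * huv'

lemma finrank_eq_of_adjoin_eq_top (hirr : Irreducible ((X : ℚ[X]) ^ n - C (m : ℚ))) (hn : n ≠ 0)
    (hα : α ^ n = (m : 𝓞 K)) (htop : Algebra.adjoin ℚ {(α : K)} = ⊤) :
    Module.finrank ℚ K = n := by
  rw [(PowerBasis.ofAdjoinEqTop (IsIntegral.of_finite ℚ (α : K)) htop).finrank,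
    PowerBasis.ofAdjoinEqTop_dim, (minpoly_int_eq_X_pow_sub_C hirr hn hα).2, natDegree_X_pow_sub_C]

lemma abs_discr_pow (hirr : Irreducible ((X : ℚ[X]) ^ n - C (m : ℚ))) (hn : n ≠ 0)
    (hα : α ^ n = (m : 𝓞 K)) (htop : Algebra.adjoin ℚ {(α : K)} = ⊤) :
    |Algebra.discr ℚ fun j : Fin n => (α : K) ^ (j : ℕ)| = n ^ n * |(m : ℚ)| ^ (n - 1) := by
  have hfin := finrank_eq_of_adjoin_eq_top hirr hn hα htop
  set B : PowerBasis ℚ K := PowerBasis.ofAdjoinEqTop (IsIntegral.of_finite ℚ (α : K)) htop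
  have hgen : B.gen = (α : K) := rfl
  have hreindex : ∀ k, k = B.dim → Algebra.discr ℚ (fun j : Fin k => (α : K) ^ (j : ℕ)) =
      Algebra.discr ℚ B.basis := by
    rintro k rfl
    rw [B.coe_basis, hgen]
  have hnorm : |Algebra.norm ℚ (α : K)| = |(m : ℚ)| := by
    have hα' : (α : K) ^ n = algebraMap ℚ K (m : ℚ) := by
      have := congrArg (algebraMap (𝓞 K) K) hα
      rwa [map_pow, map_intCast, ← map_intCast (algebraMap ℚ K)] at this
    have h := congrArg (fun x => |Algebra.norm ℚ x|) hα'
    simp only [map_pow, Algebra.norm_algebraMap, hfin, abs_pow] at h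
    exact (pow_left_inj₀ (abs_nonneg _) (abs_nonneg _) hn).mp h
  rw [hreindex n (by rw [← B.finrank, hfin]), Algebra.discr_powerBasis_eq_norm, hgen,
    (minpoly_int_eq_X_pow_sub_C hirr hn hα).2, abs_mul, abs_pow, abs_neg, abs_one, one_pow, one_mul]
  have hder : aeval (α : K) (derivative (X ^ n - C (m : ℚ))) =
      algebraMap ℚ K n * (α : K) ^ (n - 1) := by
    simp [derivative_X_pow]
  rw [hder, map_mul, Algebra.norm_algebraMap, hfin, map_pow, abs_mul, abs_pow, abs_pow, hnorm,
    Nat.abs_cast]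

lemma exists_discr_eq_det_sq_mul {ι : Type*} [Fintype ι] [DecidableEq ι]
    (b : Module.Basis ι ℤ (𝓞 K)) (v : ι → 𝓞 K) :
    ∃ t : ℤ, Algebra.discr ℚ (fun i => (v i : K)) = ((b.det v ^ 2 * t : ℤ) : ℚ) := by
  obtain ⟨t, ht⟩ := IsIntegrallyClosed.isIntegral_iff.mp
    (Algebra.discr_isIntegral ℚ (R := ℤ) (b := fun i => (b i : K)) fun i => (b i).isIntegral_coe)
  refine ⟨t, ?_⟩
  have hv : (fun i => (v i : K)) = Matrix.vecMul (fun i => (b i : K))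
      (((b.toMatrix v).map (Int.castRingHom ℚ)).map (algebraMap ℚ K)) := by
    ext j
    rw [← b.sum_toMatrix_smul_self v j]
    simp only [Matrix.vecMul, dotProduct, Matrix.map_apply, map_sum, zsmul_eq_mul, map_mul,
      map_intCast, eq_intCast]
    exact Finset.sum_congr rfl fun i _ => mul_comm _ _
  rw [hv, Algebra.discr_of_matrix_vecMul, ← ht, ← RingHom.mapMatrix_apply, ← RingHom.map_det,
    Module.Basis.det_apply]
  simp

/-- If `𝓞 K = ℤ[θ]`, the index form value `det (α ^ j)` is an `N`-th power modulo each prime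
dividing `m`, with `N = n (n - 1) / 2`. -/
lemma det_ne_zero_and_exists_pow_eq (hm : Squarefree m)
    (hirr : Irreducible ((X : ℚ[X]) ^ n - C (m : ℚ))) (hn : n ≠ 0) (hα : α ^ n = (m : 𝓞 K))
    (htop : Algebra.adjoin ℚ {(α : K)} = ⊤) {θ : 𝓞 K} (b : Module.Basis (Fin n) ℤ (𝓞 K))
    (hb : ∀ i, b i = θ ^ (i : ℕ)) {p : ℕ} (hp : p.Prime) (hpm : (p : ℤ) ∣ m) :
    ((b.det fun j : Fin n => α ^ (j : ℕ) : ℤ) : ZMod p) ≠ 0 ∧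
      ∃ y : ZMod p, y ^ (n * (n - 1) / 2) = ((b.det fun j : Fin n => α ^ (j : ℕ) : ℤ) : ZMod p) := by
  have : Fact p.Prime := ⟨hp⟩
  obtain ⟨g, hg⟩ := exists_aeval_sub_mem_span hm hirr hn hα htop hp hpm θ
  set I : Ideal (𝓞 K) := Ideal.span {(p : 𝓞 K)} with hI
  have hαI : α ^ n ∈ I := by
    rw [hα, hI, Ideal.mem_span_singleton]
    simpa using map_dvd (Int.castRingHom (𝓞 K)) hpm
  have hpow : ∀ j : ℕ, θ ^ j - ∑ i : Fin n, (g ^ j).coeff i • α ^ (i : ℕ) ∈ I := fun j => by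
    have h1 : θ ^ j - aeval α g ^ j ∈ I :=
      I.mem_of_dvd (sub_dvd_pow_sub_pow θ (aeval α g) j) hg
    have h2 := I.add_mem h1 (aeval_sub_sum_range_mem hαI (g ^ j))
    rwa [map_pow, sub_add_sub_cancel] at h2
  set A : Matrix (Fin n) (Fin n) ℤ := b.toMatrix fun j : Fin n => α ^ (j : ℕ) with hA
  have hmul : A.map (Int.castRingHom (ZMod p)) *
      (Matrix.of fun i j : Fin n => ((g.map (Int.castRingHom (ZMod p))) ^ (j : ℕ)).coeff i) = 1 := by
    ext k j
    obtain ⟨w, hw⟩ := Ideal.mem_span_singleton.mp (hpow j)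
    have hw' : θ ^ (j : ℕ) = ∑ i : Fin n, (g ^ (j : ℕ)).coeff i • α ^ (i : ℕ) + (p : ℤ) • w := by
      rw [zsmul_eq_mul, Int.cast_natCast, ← hw]
      ring
    have hrepr := congrArg (fun x => ((b.repr x k : ℤ) : ZMod p)) hw'
    simp only [← hb, b.repr_self, map_add, map_sum, map_smul, Finsupp.add_apply,
      Finsupp.finsetSum_apply, Finsupp.smul_apply, smul_eq_mul] at hrepr
    push_cast at hrepr
    rw [CharP.cast_eq_zero, zero_mul, add_zero] at hrepr
    rw [Matrix.mul_apply]
    simp only [Matrix.map_apply, Matrix.of_apply, ← Polynomial.map_pow, coeff_map, eq_intCast]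
    rw [Matrix.one_apply]
    rw [Finsupp.single_apply] at hrepr
    simp only [eq_comm (a := k)]
    push_cast at hrepr
    rw [hrepr]
    exact Finset.sum_congr rfl fun i _ => mul_comm _ _
  have hdet := congrArg Matrix.det hmul
  rw [Matrix.det_mul, Matrix.det_one, det_coeff_pow, ← RingHom.mapMatrix_apply, ← RingHom.map_det,
    eq_intCast] at hdet
  rw [Module.Basis.det_apply]
  refine ⟨left_ne_zero_of_mul_eq_one hdet, ((g.map (Int.castRingHom (ZMod p))).coeff 1)⁻¹, ?_⟩
  rw [inv_pow]
  exact (eq_inv_of_mul_eq_one_left hdet).symm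

lemma exists_residue_of_adjoin_eq_top (hm : Squarefree m)
    (hirr : Irreducible ((X : ℚ[X]) ^ n - C (m : ℚ))) (hn : n ≠ 0) (hα : α ^ n = (m : 𝓞 K))
    (htop : Algebra.adjoin ℚ {(α : K)} = ⊤) {θ : 𝓞 K} (hθ : Algebra.adjoin ℤ {θ} = ⊤)
    (hne : Algebra.adjoin ℤ {α} ≠ ⊤) :
    ∃ c : ℤ, 1 < |c| ∧ c ^ 2 ∣ (n : ℤ) ^ n ∧ ∀ p : ℕ, p.Prime → (p : ℤ) ∣ m →
      ∃ y : ZMod p, y ^ (n * (n - 1) / 2) = (c : ZMod p) := by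
  have hfin := finrank_eq_of_adjoin_eq_top hirr hn hα htop
  have hθint : IsIntegral ℤ θ := Algebra.IsIntegral.isIntegral θ
  set B := PowerBasis.ofAdjoinEqTop' hθint hθ
  have hdim : B.dim = n := by rw [← B.finrank, RingOfIntegers.rank, hfin]
  set b : Module.Basis (Fin n) ℤ (𝓞 K) := B.basis.reindex (finCongr hdim) with hbdef
  have hb : ∀ i, b i = θ ^ (i : ℕ) := fun i => by
    rw [hbdef, Module.Basis.reindex_apply, B.basis_eq_pow,
      show B.gen = θ from PowerBasis.ofAdjoinEqTop'_gen hθint hθ]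
    rfl
  set v : Fin n → 𝓞 K := fun j => α ^ (j : ℕ) with hv
  have hres := fun (p : ℕ) (hp : p.Prime) (hpm : (p : ℤ) ∣ m) =>
    det_ne_zero_and_exists_pow_eq hm hirr hn hα htop b hb hp hpm
  obtain ⟨t, ht⟩ := exists_discr_eq_det_sq_mul b v
  have habs : |b.det v ^ 2 * t| = (n : ℤ) ^ n * |m| ^ (n - 1) := by
    have h := abs_discr_pow hirr hn hα htop
    simp only [hv, map_pow] at ht
    rw [ht] at h
    exact_mod_cast h
  have hc0 : b.det v ≠ 0 := by
    intro h0
    rw [h0, zero_pow two_ne_zero, zero_mul, abs_zero] at habs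
    exact mul_ne_zero (pow_ne_zero _ (by exact_mod_cast hn))
      (pow_ne_zero _ (abs_ne_zero.mpr hm.ne_zero)) habs.symm
  refine ⟨b.det v, ?_, ?_, fun p hp hpm => (hres p hp hpm).2⟩
  · refine lt_of_le_of_ne (Int.one_le_abs hc0) fun h1 => hne ?_
    have hspan := ((Module.Basis.is_basis_iff_det b).mpr (Int.isUnit_iff_abs_eq.mpr h1.symm)).2
    rw [eq_top_iff, ← Subalgebra.toSubmodule.le_iff_le, Algebra.top_toSubmodule, ← hspan,
      Submodule.span_le]
    rintro _ ⟨j, rfl⟩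
    exact pow_mem (Algebra.self_mem_adjoin_singleton ℤ α) _
  · have hcop : IsCoprime (b.det v ^ 2) (|m| ^ (n - 1)) := by
      refine IsCoprime.pow (Int.isCoprime_iff_gcd_eq_one.mpr ?_)
      by_contra hgcd
      obtain ⟨p, hp, hpd⟩ := Nat.exists_prime_and_dvd hgcd
      have hpc : (p : ℤ) ∣ b.det v :=
        (Int.natCast_dvd_natCast.mpr hpd).trans (Int.gcd_dvd_left _ _)
      have hpm : (p : ℤ) ∣ m :=
        (dvd_abs _ _).mp ((Int.natCast_dvd_natCast.mpr hpd).trans (Int.gcd_dvd_right _ _))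
      exact (hres p hp hpm).1 ((ZMod.intCast_zmod_eq_zero_iff_dvd _ _).mpr hpc)
    refine hcop.dvd_of_dvd_mul_right ?_
    rw [← habs, dvd_abs]
    exact dvd_mul_right _ _

end PureMonogenic

lemma exists_numberField_pow_eq {n : ℕ} {m : ℤ}
    (hirr : Irreducible ((X : ℚ[X]) ^ n - C (m : ℚ))) :
    ∃ (K : Type) (_ : Field K) (_ : NumberField K) (x : K),
      x ^ n = (m : K) ∧ Algebra.adjoin ℚ {x} = ⊤ := by
  have : Fact (Irreducible ((X : ℚ[X]) ^ n - C (m : ℚ))) := ⟨hirr⟩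
  refine ⟨AdjoinRoot ((X : ℚ[X]) ^ n - C (m : ℚ)), inferInstance, inferInstance,
    AdjoinRoot.root _, ?_, ?_⟩
  · have := AdjoinRoot.eval₂_root ((X : ℚ[X]) ^ n - C (m : ℚ))
    rw [eval₂_sub, eval₂_pow, eval₂_X, eval₂_C, sub_eq_zero] at this
    exact this.trans (map_intCast (AdjoinRoot.of _) m)
  · convert! AdjoinRoot.adjoinRoot_eq_top (f := (X : ℚ[X]) ^ n - C (m : ℚ))

lemma exists_residue_of_memD {n : ℕ} (hn : n ≠ 0) {m : ℤ} (hm : MemD n m) :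
    ∃ c : ℤ, 1 < |c| ∧ c ^ 2 ∣ (n : ℤ) ^ n ∧ ∀ p : ℕ, p.Prime → (p : ℤ) ∣ m →
      ∃ y : ZMod p, y ^ (n * (n - 1) / 2) = (c : ZMod p) := by
  obtain ⟨hsq, -, hirr, hK⟩ := hm
  obtain ⟨K, _, _, x, hxn, htop⟩ := exists_numberField_pow_eq hirr
  have hintegral : IsIntegral ℤ x :=
    IsIntegral.of_pow (Nat.pos_of_ne_zero hn) (hxn ▸ isIntegral_algebraMap (x := m))
  obtain ⟨α, rfl⟩ := (IsIntegralClosure.isIntegral_iff (A := 𝓞 K)).mp hintegral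
  obtain ⟨⟨θ, hθ⟩, hne⟩ := hK K α hxn htop
  refine exists_residue_of_adjoin_eq_top hsq hirr hn ?_ htop hθ hne
  apply FaithfulSMul.algebraMap_injective (𝓞 K) K
  rw [map_pow, map_intCast, hxn]

lemma card_filter_memD_le (n : ℕ) (hn : 4 ≤ n) (x : ℕ) :
    ((Finset.Icc (-(x : ℤ)) (x : ℤ)).filter (fun m => MemD n m)).card ≤
      ∑ c ∈ (Finset.Icc (-(n : ℤ) ^ n) ((n : ℤ) ^ n)).filter
          (fun c => 1 < |c| ∧ c ^ 2 ∣ (n : ℤ) ^ n),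
        ((Finset.Icc (-(x : ℤ)) (x : ℤ)).filter
          (fun m => ∀ p ∈ nonResiduePrimes (n * (n - 1) / 2) c, ¬ (p : ℤ) ∣ m)).card := by
  refine le_trans (Finset.card_le_card fun m hm => ?_) Finset.card_biUnion_le
  obtain ⟨hmx, hmD⟩ := Finset.mem_filter.mp hm
  obtain ⟨c, hc, hdvd, hres⟩ := exists_residue_of_memD (by omega) hmD
  have hle : |c| ≤ (n : ℤ) ^ n := by
    have h1 : c ^ 2 ≤ (n : ℤ) ^ n := Int.le_of_dvd (by positivity) hdvd
    have h2 : |c| ≤ |c| ^ 2 := le_self_pow₀ hc.le two_ne_zero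
    rw [sq_abs] at h2
    exact h2.trans h1
  refine Finset.mem_biUnion.mpr ⟨c, Finset.mem_filter.mpr ⟨?_, hc, hdvd⟩,
    Finset.mem_filter.mpr ⟨hmx, fun p hp hpm => hp.2 (hres p hp.1 hpm)⟩⟩
  exact Finset.mem_Icc.mpr (abs_le.mp hle)

/-- **Density equality of monogenicity and `α`-monogenicity in the pure family.**
For `n ≥ 4`, the set of squarefree `m` with `X^n − m` irreducible for which `𝓞_m` is
monogenic but `𝓞_m ≠ ℤ[α]` has two-sided natural density `0`. -/
theorem density_zero_monogenic_not_alpha (n : ℕ) (hn : 4 ≤ n) :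
    Tendsto (fun X : ℕ =>
        (((Finset.Icc (-(X : ℤ)) (X : ℤ)).filter (fun m => MemD n m)).card : ℝ) /
          (2 * X))
      atTop (nhds 0) := by
  have hlim := tendsto_finsetSum ((Finset.Icc (-(n : ℤ) ^ n) ((n : ℤ) ^ n)).filter
      (fun c => 1 < |c| ∧ c ^ 2 ∣ (n : ℤ) ^ n)) fun c hc =>
    tendsto_card_filter_not_dvd_div (nonResiduePrimes (n * (n - 1) / 2) c) (fun p hp => hp.1)
      (not_summable_nonResiduePrimes hn (Finset.mem_filter.mp hc).2.1 (Finset.mem_filter.mp hc).2.2)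
  rw [Finset.sum_const_zero] at hlim
  refine squeeze_zero (fun x => by positivity) (fun x => ?_) hlim
  rw [← Finset.sum_div]
  gcongr
  exact_mod_cast card_filter_memD_le n hn x
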